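/- arXiv:1809.09814 — 2 statements merged into one kernel-verified Lean document; each statement's English description precedes it below -/
import Mathlib

section
/- Theorem 2 (feasibility recovery from an infeasible initial point): Let k ∈ {1,2,3} and set ω₁ = 1/4, ω₂ = 1/(2n), ω₃ = 1/(2 + 2√n). Suppose the BMI feasible set F is nonempty, ‖p‖₂ > 0, and x̌ ∈ ℝⁿ satisfies s(x̌) > 0 and d_F(x̌)/s(x̌) < ωₖ/‖p‖₂. Then there exists η₀ > 0 such that for every η ≥ η₀, the penalized convex relaxation (R_{η,Cₖ}) has an optimal solution (x*, X*) which is unique (every optimal solution equals (x*, X*)) and satisfies X* = x* x*ᵀ. -/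
/-!
For a feasible pair `(x, X)` put `H = X - xxᵀ`. The objective is `cᵀx + η (‖x - x̌‖² + tr H)`, so
for every `r > d_F(x̌)` and all large `η` an optimal `x` lies within `r` of `x̌`. Since
`s(x̌) > 0`, moving `x` by `τb` for a suitable unit vector `b`, and `X` by the linearization
`τ(bx̌ᵀ + x̌bᵀ)`, creates slack `τs` in the matrix inequality, for any `s < s(x̌)`. This slack
pays for shrinking `H`. If `tr (M H) ≤ κ ‖M‖ tr H` for all `H ∈ C` and all `M`, then shrinking
`H` by `θH` costs at most `κ θ ‖p‖₂ tr H`, and linearizing at `x̌` instead of `x` costs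
`2 τ ‖p‖₂ r` to first order in `τ`; what remains allows `κ θ ‖p‖₂ tr H ≈ τ (s - 2 ‖p‖₂ r)`. The
penalty `‖x - x̌‖² + tr H` then changes, to first order, by at most `2τr - θ tr H`, which is
negative as soon as `s > 2(1 + κ) ‖p‖₂ r`, and for large `η` this contradicts optimality unless
`H = 0`. Hence `ω = 1 / (2(1 + κ))`, where `κ = 1` for `C₁` and `κ = √n` for `C₃`. For `C₂` one
can take `κ = n - 1`: if `n = 2` then `C₂ = C₁`, and if `n ≥ 3` then `√n ≤ n - 1`. For `n = 1`
the cone `C₂` is a half-line, a nonzero `H` is interior to it, and `H` can be decreased directly.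

Compactness of the sublevel sets gives existence. The midpoint of two optimal pairs with
`X = xxᵀ` is again optimal, hence also of this form, which forces the two to coincide.
-/

open Matrix

noncomputable section

/-- Euclidean (ℓ₂) norm of a finite real vector. -/
def vecNorm {k : ℕ} (u : Fin k → ℝ) : ℝ := Real.sqrt (∑ i, u i ^ 2)

/-- The matrix pencil `p(x, X) = F₀ + ∑ₖ xₖ Kₖ + ∑ᵢ ∑ⱼ Xᵢⱼ Lᵢⱼ`. -/
def pencil {n m : ℕ} (F0 : Matrix (Fin m) (Fin m) ℝ)
    (K : Fin n → Matrix (Fin m) (Fin m) ℝ)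
    (L : Fin n → Fin n → Matrix (Fin m) (Fin m) ℝ)
    (x : Fin n → ℝ) (X : Matrix (Fin n) (Fin n) ℝ) : Matrix (Fin m) (Fin m) ℝ :=
  F0 + ∑ k, x k • K k + ∑ i, ∑ j, X i j • L i j

/-- Negative semidefinite real matrix. -/
def NegSemidef' {k : ℕ} (A : Matrix (Fin k) (Fin k) ℝ) : Prop := (-A).PosSemidef

/-- Negative definite real matrix. -/
def NegDef' {k : ℕ} (A : Matrix (Fin k) (Fin k) ℝ) : Prop := (-A).PosDef

/-- The BMI feasible set `F = {x : p(x, xxᵀ) ⪯ 0}`. -/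
def feasSet {n m : ℕ} (F0 : Matrix (Fin m) (Fin m) ℝ)
    (K : Fin n → Matrix (Fin m) (Fin m) ℝ)
    (L : Fin n → Fin n → Matrix (Fin m) (Fin m) ℝ) : Set (Fin n → ℝ) :=
  {x | NegSemidef' (pencil F0 K L x (vecMulVec x x))}

/-- Feasibility distance `d_F(x) = inf {‖x − a‖₂ : a ∈ F}`. -/
def distF {n m : ℕ} (F0 : Matrix (Fin m) (Fin m) ℝ)
    (K : Fin n → Matrix (Fin m) (Fin m) ℝ)
    (L : Fin n → Fin n → Matrix (Fin m) (Fin m) ℝ) (x : Fin n → ℝ) : ℝ :=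
  sInf {r | ∃ a ∈ feasSet F0 K L, r = vecNorm (x - a)}

/-- `δₖ(x) = 2 ∑ᵢ xᵢ L_{k i}`. -/
def deltaMat {n m : ℕ} (L : Fin n → Fin n → Matrix (Fin m) (Fin m) ℝ)
    (k : Fin n) (x : Fin n → ℝ) : Matrix (Fin m) (Fin m) ℝ :=
  (2 : ℝ) • ∑ i, x i • L k i

/-- The MFCQ condition at a point `x`. -/
def MFCQ {n m : ℕ} (F0 : Matrix (Fin m) (Fin m) ℝ)
    (K : Fin n → Matrix (Fin m) (Fin m) ℝ)
    (L : Fin n → Fin n → Matrix (Fin m) (Fin m) ℝ) (x : Fin n → ℝ) : Prop :=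
  ∃ b : Fin n → ℝ,
    NegDef' (pencil F0 K L x (vecMulVec x x) + ∑ k, b k • (K k + deltaMat L k x))

/-- Smallest eigenvalue of a symmetric real matrix, via the Rayleigh quotient. -/
def lambdaMin {k : ℕ} (A : Matrix (Fin k) (Fin k) ℝ) : ℝ :=
  sInf {r | ∃ u : Fin k → ℝ, vecNorm u = 1 ∧ r = u ⬝ᵥ (A *ᵥ u)}

/-- The G-MFCQ function `s(x)`. -/
def sFun {n m : ℕ} (K : Fin n → Matrix (Fin m) (Fin m) ℝ)
    (L : Fin n → Fin n → Matrix (Fin m) (Fin m) ℝ) (x : Fin n → ℝ) : ℝ :=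
  sSup {r | ∃ b : Fin n → ℝ, vecNorm b = 1 ∧
    r = lambdaMin (-(∑ k, b k • (K k + deltaMat L k x)))}

/-- Spectral norm of a real matrix. -/
def specNorm {k : ℕ} (A : Matrix (Fin k) (Fin k) ℝ) : ℝ :=
  sSup {r | ∃ v : Fin k → ℝ, vecNorm v = 1 ∧ r = vecNorm (A *ᵥ v)}

/-- Pencil norm `‖p‖₂`. -/
def pencilNorm {n m : ℕ} (L : Fin n → Fin n → Matrix (Fin m) (Fin m) ℝ) : ℝ :=
  sSup {r | ∃ u : Fin m → ℝ, vecNorm u = 1 ∧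
    r = specNorm (Matrix.of fun i j => u ⬝ᵥ (L i j *ᵥ u))}

/-- Cone `C₁`: positive semidefinite matrices. -/
def coneC1 (n : ℕ) : Set (Matrix (Fin n) (Fin n) ℝ) := {H | H.PosSemidef}

/-- Cone `C₂`: symmetric matrices with `Hᵢᵢ ≥ 0` and `Hᵢᵢ Hⱼⱼ ≥ Hᵢⱼ²`. -/
def coneC2 (n : ℕ) : Set (Matrix (Fin n) (Fin n) ℝ) :=
  {H | H.IsSymm ∧ ∀ i j, 0 ≤ H i i ∧ H i j ^ 2 ≤ H i i * H j j}

/-- Cone `C₃`: symmetric matrices with `Hᵢᵢ ≥ 0` and `Hᵢᵢ + Hⱼⱼ ≥ 2|Hᵢⱼ|`. -/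
def coneC3 (n : ℕ) : Set (Matrix (Fin n) (Fin n) ℝ) :=
  {H | H.IsSymm ∧ ∀ i j, 0 ≤ H i i ∧ 2 * |H i j| ≤ H i i + H j j}

/-- Dual cone with respect to the trace inner product. -/
def dualCone {n : ℕ} (C : Set (Matrix (Fin n) (Fin n) ℝ)) :
    Set (Matrix (Fin n) (Fin n) ℝ) :=
  {Y | Y.IsSymm ∧ ∀ H ∈ C, 0 ≤ (Y * H).trace}

/-- `α(Λ)` : the n×n matrix with entries `⟨Lᵢⱼ, Λ⟩ = tr(Lᵢⱼ Λ)`. -/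
def alphaMat {n m : ℕ} (L : Fin n → Fin n → Matrix (Fin m) (Fin m) ℝ)
    (Λ : Matrix (Fin m) (Fin m) ℝ) : Matrix (Fin n) (Fin n) ℝ :=
  Matrix.of fun i j => (L i j * Λ).trace

/-- Objective of the penalized problem `(P_η)`. -/
def penObj {n : ℕ} (c xc : Fin n → ℝ) (η : ℝ) (x : Fin n → ℝ) : ℝ :=
  c ⬝ᵥ x + η * vecNorm (x - xc) ^ 2

/-- `x` is an optimal solution of the penalized problem `(P_η)`. -/
def IsOptPen {n m : ℕ} (F0 : Matrix (Fin m) (Fin m) ℝ)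
    (K : Fin n → Matrix (Fin m) (Fin m) ℝ)
    (L : Fin n → Fin n → Matrix (Fin m) (Fin m) ℝ)
    (c xc : Fin n → ℝ) (η : ℝ) (x : Fin n → ℝ) : Prop :=
  x ∈ feasSet F0 K L ∧ ∀ y ∈ feasSet F0 K L, penObj c xc η x ≤ penObj c xc η y

/-- Objective of the penalized convex relaxation `(R_{η,C})`. -/
def relObj {n : ℕ} (c xc : Fin n → ℝ) (η : ℝ) (x : Fin n → ℝ)
    (X : Matrix (Fin n) (Fin n) ℝ) : ℝ :=
  c ⬝ᵥ x + η * (X.trace - 2 * (xc ⬝ᵥ x) + xc ⬝ᵥ xc)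

/-- Feasibility for the relaxation with cone `C`. -/
def RelFeasible {n m : ℕ} (F0 : Matrix (Fin m) (Fin m) ℝ)
    (K : Fin n → Matrix (Fin m) (Fin m) ℝ)
    (L : Fin n → Fin n → Matrix (Fin m) (Fin m) ℝ)
    (C : Set (Matrix (Fin n) (Fin n) ℝ))
    (x : Fin n → ℝ) (X : Matrix (Fin n) (Fin n) ℝ) : Prop :=
  X.IsSymm ∧ NegSemidef' (pencil F0 K L x X) ∧ X - vecMulVec x x ∈ C

/-- `(x, X)` is an optimal solution of the penalized convex relaxation `(R_{η,C})`. -/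
def IsOptRel {n m : ℕ} (F0 : Matrix (Fin m) (Fin m) ℝ)
    (K : Fin n → Matrix (Fin m) (Fin m) ℝ)
    (L : Fin n → Fin n → Matrix (Fin m) (Fin m) ℝ)
    (c xc : Fin n → ℝ) (η : ℝ) (C : Set (Matrix (Fin n) (Fin n) ℝ))
    (x : Fin n → ℝ) (X : Matrix (Fin n) (Fin n) ℝ) : Prop :=
  RelFeasible F0 K L C x X ∧
    ∀ y Y, RelFeasible F0 K L C y Y → relObj c xc η x X ≤ relObj c xc η y Y

/-- The KKT conditions for `(P_η)` at `(x, Λ)`. -/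
def KKT {n m : ℕ} (F0 : Matrix (Fin m) (Fin m) ℝ)
    (K : Fin n → Matrix (Fin m) (Fin m) ℝ)
    (L : Fin n → Fin n → Matrix (Fin m) (Fin m) ℝ)
    (c xc : Fin n → ℝ) (η : ℝ)
    (x : Fin n → ℝ) (Λ : Matrix (Fin m) (Fin m) ℝ) : Prop :=
  Λ.IsSymm ∧ Λ.PosSemidef ∧
  c + (2 * η) • (x - xc) + (∑ k, ((K k * Λ).trace) • (Pi.single k 1 : Fin n → ℝ))
      + (2 : ℝ) • (alphaMat L Λ *ᵥ x) = 0 ∧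
  Λ * pencil F0 K L x (vecMulVec x x) = 0


open Filter Topology

section Euclidean

variable {k : ℕ}

lemma vecNorm_eq_norm (u : Fin k → ℝ) : vecNorm u = ‖WithLp.toLp 2 u‖ := by
  simp [vecNorm, EuclideanSpace.norm_eq]

lemma vecNorm_nonneg (u : Fin k → ℝ) : 0 ≤ vecNorm u := Real.sqrt_nonneg _

lemma vecNorm_sq (u : Fin k → ℝ) : vecNorm u ^ 2 = u ⬝ᵥ u := by
  rw [vecNorm, Real.sq_sqrt (Finset.sum_nonneg fun _ _ => sq_nonneg _)]
  simp only [dotProduct, sq]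

lemma vecNorm_sub_le (u v : Fin k → ℝ) : vecNorm (u - v) ≤ vecNorm u + vecNorm v := by
  simpa only [vecNorm_eq_norm, WithLp.toLp_sub] using norm_sub_le _ _

lemma vecNorm_sub_comm (u v : Fin k → ℝ) : vecNorm (u - v) = vecNorm (v - u) := by
  simpa only [vecNorm_eq_norm, WithLp.toLp_sub] using norm_sub_rev _ _

lemma vecNorm_inv_vecNorm_smul {u : Fin k → ℝ} (hu : u ≠ 0) :
    vecNorm ((vecNorm u)⁻¹ • u) = 1 := by
  rw [vecNorm_eq_norm, vecNorm_eq_norm, WithLp.toLp_smul]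
  exact norm_smul_inv_norm (𝕜 := ℝ) ((WithLp.toLp_eq_zero 2).not.2 hu)

lemma vecNorm_single_one (i : Fin k) : vecNorm (Pi.single i 1) = 1 := by
  simp [vecNorm, Pi.single_apply]

lemma dotProduct_le_vecNorm_mul_vecNorm (u v : Fin k → ℝ) : u ⬝ᵥ v ≤ vecNorm u * vecNorm v :=
  Real.sum_mul_le_sqrt_mul_sqrt Finset.univ u v

lemma abs_apply_le_vecNorm (u : Fin k → ℝ) (i : Fin k) : |u i| ≤ vecNorm u :=
  (PiLp.norm_apply_le (WithLp.toLp 2 u) i).trans_eq (vecNorm_eq_norm u).symm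

lemma continuous_vecNorm : Continuous (vecNorm : (Fin k → ℝ) → ℝ) := by
  unfold vecNorm
  fun_prop

lemma isCompact_setOf_vecNorm_eq_one : IsCompact {u : Fin k → ℝ | vecNorm u = 1} := by
  refine Metric.isCompact_of_isClosed_isBounded
    (isClosed_eq continuous_vecNorm continuous_const) (isBounded_iff_forall_norm_le.2 ⟨1, ?_⟩)
  exact fun u hu => (pi_norm_le_iff_of_nonneg zero_le_one).2 fun i =>
    (abs_apply_le_vecNorm u i).trans_eq hu

end Euclidean

section SpectralNorm

open scoped Matrix.Norms.L2Operator

variable {k : ℕ}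

lemma vecNorm_mulVec_le (A : Matrix (Fin k) (Fin k) ℝ) (v : Fin k → ℝ) :
    vecNorm (A *ᵥ v) ≤ ‖A‖ * vecNorm v := by
  rw [vecNorm_eq_norm, vecNorm_eq_norm]
  exact l2_opNorm_mulVec A (WithLp.toLp 2 v)

lemma dotProduct_mulVec_le (A : Matrix (Fin k) (Fin k) ℝ) (u v : Fin k → ℝ) :
    u ⬝ᵥ A *ᵥ v ≤ ‖A‖ * (vecNorm u * vecNorm v) :=
  calc u ⬝ᵥ A *ᵥ v ≤ vecNorm u * vecNorm (A *ᵥ v) := dotProduct_le_vecNorm_mul_vecNorm _ _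
    _ ≤ vecNorm u * (‖A‖ * vecNorm v) :=
        mul_le_mul_of_nonneg_left (vecNorm_mulVec_le A v) (vecNorm_nonneg u)
    _ = ‖A‖ * (vecNorm u * vecNorm v) := mul_left_comm _ _ _

lemma specNorm_eq_l2_opNorm (A : Matrix (Fin k) (Fin k) ℝ) : specNorm A = ‖A‖ := by
  have hle : ∀ r ∈ {r | ∃ v : Fin k → ℝ, vecNorm v = 1 ∧ r = vecNorm (A *ᵥ v)}, r ≤ ‖A‖ := by
    rintro _ ⟨v, hv, rfl⟩
    simpa [hv] using vecNorm_mulVec_le A v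
  refine le_antisymm (Real.sSup_le hle (norm_nonneg A)) ?_
  refine ContinuousLinearMap.opNorm_le_of_unit_norm
    (Real.sSup_nonneg (by rintro _ ⟨v, -, rfl⟩; exact vecNorm_nonneg _)) fun v hv => ?_
  refine le_csSup ⟨‖A‖, hle⟩ ⟨WithLp.ofLp v, ?_, ?_⟩ <;> rw [vecNorm_eq_norm]
  · exact hv
  · rfl

lemma sum_abs_row_le (A : Matrix (Fin k) (Fin k) ℝ) (i : Fin k) :
    ∑ j, |A i j| ≤ √k * ‖A‖ := by
  have hrow : vecNorm (A i) ≤ ‖A‖ := by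
    calc vecNorm (A i) = vecNorm (Aᴴ *ᵥ Pi.single i 1) := by
          rw [mulVec_single_one, conjTranspose_eq_transpose_of_trivial]; rfl
      _ ≤ ‖Aᴴ‖ * vecNorm (Pi.single i 1) := vecNorm_mulVec_le _ _
      _ = ‖A‖ := by rw [l2_opNorm_conjTranspose, vecNorm_single_one, mul_one]
  calc ∑ j, |A i j| = ∑ j, 1 * |A i j| := by simp only [one_mul]
    _ ≤ √(∑ _j : Fin k, 1 ^ 2) * √(∑ j, |A i j| ^ 2) :=
        Real.sum_mul_le_sqrt_mul_sqrt _ _ _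
    _ = √k * vecNorm (A i) := by simp [vecNorm]
    _ ≤ √k * ‖A‖ := mul_le_mul_of_nonneg_left hrow (Real.sqrt_nonneg _)

end SpectralNorm

section QuadraticForm

variable {k : ℕ}

/-- The quadratic form `uᵀ A u`, as a linear function of the matrix `A`. -/
def quadForm (u : Fin k → ℝ) : Matrix (Fin k) (Fin k) ℝ →ₗ[ℝ] ℝ where
  toFun A := u ⬝ᵥ A *ᵥ u
  map_add' A B := by rw [add_mulVec, dotProduct_add]
  map_smul' t A := by rw [smul_mulVec, dotProduct_smul, RingHom.id_apply]

lemma quadForm_apply (u : Fin k → ℝ) (A : Matrix (Fin k) (Fin k) ℝ) :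
    quadForm u A = u ⬝ᵥ A *ᵥ u := rfl

lemma quadForm_smul_left (t : ℝ) (u : Fin k → ℝ) (A : Matrix (Fin k) (Fin k) ℝ) :
    quadForm (t • u) A = t ^ 2 * quadForm u A := by
  simp only [quadForm_apply, mulVec_smul, dotProduct_smul, smul_dotProduct, smul_eq_mul]
  ring

lemma posSemidef_iff_quadForm {A : Matrix (Fin k) (Fin k) ℝ} :
    A.PosSemidef ↔ A.IsSymm ∧ ∀ u, 0 ≤ quadForm u A := by
  rw [posSemidef_iff_dotProduct_mulVec]
  simp [IsHermitian, IsSymm, quadForm_apply]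

lemma NegSemidef'.quadForm_nonpos {A : Matrix (Fin k) (Fin k) ℝ} (hA : NegSemidef' A)
    (u : Fin k → ℝ) : quadForm u A ≤ 0 := by
  simpa using (posSemidef_iff_quadForm.1 hA).2 u

lemma NegSemidef'.isSymm {A : Matrix (Fin k) (Fin k) ℝ} (hA : NegSemidef' A) : A.IsSymm := by
  simpa using (posSemidef_iff_quadForm.1 hA).1.neg

lemma NegSemidef'.of_unit {A : Matrix (Fin k) (Fin k) ℝ} (hA : A.IsSymm)
    (h : ∀ u, vecNorm u = 1 → quadForm u A ≤ 0) : NegSemidef' A := by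
  refine posSemidef_iff_quadForm.2 ⟨hA.neg, fun u => ?_⟩
  rw [map_neg, neg_nonneg]
  rcases eq_or_ne u 0 with rfl | hu
  · simp [quadForm_apply]
  · have hunit := h _ (vecNorm_inv_vecNorm_smul hu)
    rw [quadForm_smul_left] at hunit
    have hpos : 0 < vecNorm u := by
      rw [vecNorm_eq_norm]
      exact norm_pos_iff.2 ((WithLp.toLp_eq_zero 2).not.2 hu)
    exact nonpos_of_mul_nonpos_right hunit (by positivity)

lemma isClosed_setOf_isSymm : IsClosed {A : Matrix (Fin k) (Fin k) ℝ | A.IsSymm} :=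
  isClosed_eq continuous_id.matrix_transpose continuous_id

lemma isClosed_setOf_posSemidef : IsClosed {A : Matrix (Fin k) (Fin k) ℝ | A.PosSemidef} := by
  simp only [posSemidef_iff_quadForm, Set.ofPred_and, Set.ofPred_forall]
  exact isClosed_setOf_isSymm.inter (isClosed_iInter fun u =>
    isClosed_le continuous_const (quadForm u).continuous_of_finiteDimensional)

lemma isSymm_vecMulVec_self (v : Fin k → ℝ) : (vecMulVec v v).IsSymm :=
  transpose_vecMulVec v v

lemma isSymm_vecMulVec_add_vecMulVec (v w : Fin k → ℝ) :
    (vecMulVec v w + vecMulVec w v).IsSymm := by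
  rw [IsSymm, transpose_add, transpose_vecMulVec, transpose_vecMulVec, add_comm]

open scoped Matrix.Norms.L2Operator in
lemma lambdaMin_le_quadForm (A : Matrix (Fin k) (Fin k) ℝ) {u : Fin k → ℝ}
    (hu : vecNorm u = 1) : lambdaMin A ≤ quadForm u A := by
  refine csInf_le ⟨-‖-A‖, ?_⟩ ⟨u, hu, rfl⟩
  rintro _ ⟨v, hv, rfl⟩
  have := dotProduct_mulVec_le (-A) v v
  rw [hv, neg_mulVec, dotProduct_neg] at this
  linarith

end QuadraticForm

section Pencil

variable {n m : ℕ}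

lemma pencil_add (F G : Matrix (Fin m) (Fin m) ℝ) (K : Fin n → Matrix (Fin m) (Fin m) ℝ)
    (L : Fin n → Fin n → Matrix (Fin m) (Fin m) ℝ) (x y : Fin n → ℝ)
    (X Y : Matrix (Fin n) (Fin n) ℝ) :
    pencil (F + G) K L (x + y) (X + Y) = pencil F K L x X + pencil G K L y Y := by
  simp only [pencil, Pi.add_apply, Matrix.add_apply, add_smul, Finset.sum_add_distrib]
  abel

lemma pencil_smul (t : ℝ) (F : Matrix (Fin m) (Fin m) ℝ) (K : Fin n → Matrix (Fin m) (Fin m) ℝ)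
    (L : Fin n → Fin n → Matrix (Fin m) (Fin m) ℝ) (x : Fin n → ℝ)
    (X : Matrix (Fin n) (Fin n) ℝ) :
    pencil (t • F) K L (t • x) (t • X) = t • pencil F K L x X := by
  simp only [pencil, Pi.smul_apply, Matrix.smul_apply, smul_eq_mul, mul_smul, smul_add,
    Finset.smul_sum]

variable {F0 : Matrix (Fin m) (Fin m) ℝ} {K : Fin n → Matrix (Fin m) (Fin m) ℝ}
  {L : Fin n → Fin n → Matrix (Fin m) (Fin m) ℝ}

lemma pencil_isSymm (hF0 : F0.IsSymm) (hK : ∀ k, (K k).IsSymm) (hL : ∀ i j, (L i j).IsSymm)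
    (x : Fin n → ℝ) (X : Matrix (Fin n) (Fin n) ℝ) : (pencil F0 K L x X).IsSymm := by
  simp only [pencil, IsSymm, transpose_add, transpose_sum, transpose_smul, hF0.eq, (hK _).eq,
    (hL _ _).eq]

lemma sum_smul_add_deltaMat (hLsy : ∀ i j, L i j = L j i) (b z : Fin n → ℝ) :
    ∑ k, b k • (K k + deltaMat L k z) =
      pencil 0 K L b (vecMulVec b z + vecMulVec z b) := by
  have hswap : ∑ i, ∑ j, (z i * b j) • L i j = ∑ i, ∑ j, (b i * z j) • L i j := by
    rw [Finset.sum_comm]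
    exact Finset.sum_congr rfl fun i _ => Finset.sum_congr rfl fun j _ => by
      rw [mul_comm, hLsy j i]
  simp only [deltaMat, two_smul]
  simp only [pencil, Matrix.add_apply, vecMulVec_apply, add_smul, smul_add,
    Finset.sum_add_distrib, hswap, zero_add, Finset.smul_sum, smul_smul]

lemma pencil_step (hLsy : ∀ i j, L i j = L j i) (x z b : Fin n → ℝ)
    (X D : Matrix (Fin n) (Fin n) ℝ) (τ : ℝ) :
    pencil F0 K L (x + τ • b) (X + τ • (vecMulVec b z + vecMulVec z b) + D) =
      pencil F0 K L x X + τ • ∑ k, b k • (K k + deltaMat L k z) + pencil 0 K L 0 D := by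
  rw [sum_smul_add_deltaMat hLsy, ← pencil_smul, ← pencil_add, ← pencil_add, smul_zero, add_zero,
    add_zero, add_zero]

/-- The matrix `M(u)` with entries `uᵀ Lᵢⱼ u`, whose spectral norms define the pencil norm. -/
def momMat (L : Fin n → Fin n → Matrix (Fin m) (Fin m) ℝ) (u : Fin m → ℝ) :
    Matrix (Fin n) (Fin n) ℝ :=
  Matrix.of fun i j => u ⬝ᵥ (L i j *ᵥ u)

lemma quadForm_pencil_zero_zero (hLsy : ∀ i j, L i j = L j i) (u : Fin m → ℝ)
    (D : Matrix (Fin n) (Fin n) ℝ) :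
    quadForm u (pencil 0 K L 0 D) = (momMat L u * D).trace := by
  simp only [pencil, Pi.zero_apply, zero_smul, Finset.sum_const_zero, zero_add, map_sum,
    map_smul, smul_eq_mul, trace, diag_apply, mul_apply]
  rw [Finset.sum_comm]
  refine Finset.sum_congr rfl fun j _ => Finset.sum_congr rfl fun i _ => ?_
  rw [momMat, of_apply, quadForm_apply, hLsy i j, mul_comm]

open scoped Matrix.Norms.L2Operator in
lemma l2_opNorm_momMat_le (L : Fin n → Fin n → Matrix (Fin m) (Fin m) ℝ) {u : Fin m → ℝ}
    (hu : vecNorm u = 1) : ‖momMat L u‖ ≤ pencilNorm L := by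
  have hcont : Continuous (momMat L) := continuous_matrix fun i j =>
    continuous_id.dotProduct (continuous_const.matrix_mulVec continuous_id)
  have hbdd : BddAbove ((fun v => specNorm (momMat L v)) '' {v | vecNorm v = 1}) := by
    simp only [specNorm_eq_l2_opNorm]
    exact isCompact_setOf_vecNorm_eq_one.bddAbove_image hcont.norm.continuousOn
  rw [← specNorm_eq_l2_opNorm]
  refine le_csSup (hbdd.mono ?_) ⟨u, hu, rfl⟩
  rintro _ ⟨v, hv, rfl⟩
  exact ⟨v, hv, rfl⟩

/-- A unit vector `b` along which the linearization of `x ↦ p(x, xxᵀ)` at `z` decreases at rate at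
least `s`; the supremum of the possible rates is `s(z)`. -/
structure IsDescentDirection (K : Fin n → Matrix (Fin m) (Fin m) ℝ)
    (L : Fin n → Fin n → Matrix (Fin m) (Fin m) ℝ) (z : Fin n → ℝ) (s : ℝ)
    (b : Fin n → ℝ) : Prop where
  vecNorm_eq_one : vecNorm b = 1
  quadForm_le : ∀ u, vecNorm u = 1 → quadForm u (∑ k, b k • (K k + deltaMat L k z)) ≤ -s

lemma exists_isDescentDirection {z : Fin n → ℝ} {s : ℝ} (hs0 : 0 ≤ s) (hs : s < sFun K L z) :
    ∃ b, IsDescentDirection K L z s b := by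
  obtain ⟨_, ⟨b, hb, rfl⟩, hsb⟩ := exists_lt_of_lt_csSup
    (Set.nonempty_iff_ne_empty.2 fun h => by rw [sFun, h, Real.sSup_empty] at hs; linarith) hs
  refine ⟨b, hb, fun u hu => ?_⟩
  have := lambdaMin_le_quadForm (-∑ k, b k • (K k + deltaMat L k z)) hu
  rw [map_neg] at this
  linarith

end Pencil

section Cones

variable {n : ℕ} {C : Set (Matrix (Fin n) (Fin n) ℝ)}

/-- The cones `C` for which the relaxation `X - xxᵀ ∈ C` has compact sublevel sets and contains the
lifts of the feasible points: closed cones of symmetric matrices whose entries are dominated by the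
trace, containing all `vvᵀ`. -/
structure IsRelaxationCone (C : Set (Matrix (Fin n) (Fin n) ℝ)) : Prop where
  isClosed : IsClosed C
  isSymm : ∀ H ∈ C, H.IsSymm
  abs_apply_le_trace : ∀ H ∈ C, ∀ i j, |H i j| ≤ H.trace
  smul_mem : ∀ t : ℝ, 0 ≤ t → ∀ H ∈ C, t • H ∈ C
  vecMulVec_self_mem : ∀ v : Fin n → ℝ, vecMulVec v v ∈ C

lemma IsRelaxationCone.zero_mem (hC : IsRelaxationCone C) : 0 ∈ C := by
  simpa using hC.vecMulVec_self_mem 0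

lemma IsRelaxationCone.trace_pos (hC : IsRelaxationCone C) {H : Matrix (Fin n) (Fin n) ℝ}
    (hH : H ∈ C) (h0 : H ≠ 0) : 0 < H.trace := by
  by_contra! h
  exact h0 (Matrix.ext fun i j =>
    abs_nonpos_iff.1 ((hC.abs_apply_le_trace H hH i j).trans h))

lemma IsRelaxationCone.trace_nonneg (hC : IsRelaxationCone C) {H : Matrix (Fin n) (Fin n) ℝ}
    (hH : H ∈ C) : 0 ≤ H.trace := by
  rcases eq_or_ne H 0 with rfl | h0
  · rw [trace_zero]
  · exact (hC.trace_pos hH h0).le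

lemma coneC2_subset_coneC3 (n : ℕ) : coneC2 n ⊆ coneC3 n := by
  refine fun H hH => ⟨hH.1, fun i j => ⟨(hH.2 i j).1, ?_⟩⟩
  have hi := (hH.2 i i).1
  have hj := (hH.2 j j).1
  have hsq : (2 * |H i j|) ^ 2 ≤ (H i i + H j j) ^ 2 := by
    rw [mul_pow, sq_abs]
    linarith [(hH.2 i j).2, sq_nonneg (H i i - H j j)]
  exact (sq_le_sq₀ (by positivity) (by positivity)).1 hsq

lemma coneC1_subset_coneC3 (n : ℕ) : coneC1 n ⊆ coneC3 n := by
  intro H hH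
  obtain ⟨hsymm, hnonneg⟩ := posSemidef_iff_quadForm.1 hH
  refine ⟨hsymm, fun i j => ⟨PosSemidef.diag_nonneg hH, ?_⟩⟩
  have hadd := hnonneg (Pi.single i 1 + Pi.single j 1)
  have hsub := hnonneg (Pi.single i 1 - Pi.single j 1)
  simp only [quadForm_apply, mulVec_add, mulVec_sub, mulVec_single_one, dotProduct_add,
    dotProduct_sub, add_dotProduct, sub_dotProduct, single_dotProduct, col_apply, one_mul,
    hsymm.apply i j] at hadd hsub
  have : |H i j| ≤ (H i i + H j j) / 2 := abs_le.2 ⟨by linarith, by linarith⟩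
  linarith

lemma abs_apply_le_trace_of_mem_coneC3 {H : Matrix (Fin n) (Fin n) ℝ} (hH : H ∈ coneC3 n)
    (i j : Fin n) : |H i j| ≤ H.trace := by
  have hdiag : ∀ l, H l l ≤ H.trace := fun l =>
    Finset.single_le_sum (f := fun l => H l l) (fun l _ => (hH.2 l l).1) (Finset.mem_univ l)
  linarith [(hH.2 i j).2, hdiag i, hdiag j]

lemma isRelaxationCone_coneC1 (n : ℕ) : IsRelaxationCone (coneC1 n) where
  isClosed := isClosed_setOf_posSemidef
  isSymm _ hH := (coneC1_subset_coneC3 n hH).1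
  abs_apply_le_trace _ hH := abs_apply_le_trace_of_mem_coneC3 (coneC1_subset_coneC3 n hH)
  smul_mem _ ht _ hH := PosSemidef.smul hH ht
  vecMulVec_self_mem v := by simpa [coneC1] using posSemidef_vecMulVec_self_star v

lemma isRelaxationCone_coneC2 (n : ℕ) : IsRelaxationCone (coneC2 n) where
  isClosed := by
    simp only [coneC2, Set.ofPred_and, Set.ofPred_forall]
    refine isClosed_setOf_isSymm.inter (isClosed_iInter fun i => isClosed_iInter fun j =>
      (isClosed_le ?_ ?_).inter (isClosed_le ?_ ?_)) <;> fun_prop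
  isSymm _ hH := hH.1
  abs_apply_le_trace _ hH := abs_apply_le_trace_of_mem_coneC3 (coneC2_subset_coneC3 n hH)
  smul_mem t ht H hH := by
    refine ⟨hH.1.smul t, fun i j => ⟨mul_nonneg ht (hH.2 i j).1, ?_⟩⟩
    calc (t * H i j) ^ 2 = t ^ 2 * H i j ^ 2 := mul_pow _ _ _
      _ ≤ t ^ 2 * (H i i * H j j) := mul_le_mul_of_nonneg_left (hH.2 i j).2 (sq_nonneg t)
      _ = t * H i i * (t * H j j) := by ring
  vecMulVec_self_mem v := by
    refine ⟨isSymm_vecMulVec_self v, fun i j => ⟨mul_self_nonneg _, le_of_eq ?_⟩⟩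
    simp only [vecMulVec_apply]
    ring

lemma isRelaxationCone_coneC3 (n : ℕ) : IsRelaxationCone (coneC3 n) where
  isClosed := by
    simp only [coneC3, Set.ofPred_and, Set.ofPred_forall]
    refine isClosed_setOf_isSymm.inter (isClosed_iInter fun i => isClosed_iInter fun j =>
      (isClosed_le ?_ ?_).inter (isClosed_le ?_ ?_)) <;> fun_prop
  isSymm _ hH := hH.1
  abs_apply_le_trace _ hH := abs_apply_le_trace_of_mem_coneC3 hH
  smul_mem t ht H hH := by
    refine ⟨hH.1.smul t, fun i j => ⟨mul_nonneg ht (hH.2 i j).1, ?_⟩⟩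
    calc 2 * |t * H i j| = t * (2 * |H i j|) := by rw [abs_mul, abs_of_nonneg ht]; ring
      _ ≤ t * (H i i + H j j) := mul_le_mul_of_nonneg_left (hH.2 i j).2 ht
      _ = t * H i i + t * H j j := mul_add _ _ _
  vecMulVec_self_mem v :=
    coneC2_subset_coneC3 n ((isRelaxationCone_coneC2 n).vecMulVec_self_mem v)

lemma coneC2_two_subset_coneC1 : coneC2 2 ⊆ coneC1 2 := by
  intro H hH
  refine posSemidef_iff_quadForm.2 ⟨hH.1, fun u => ?_⟩
  have h0 := (hH.2 0 0).1
  have h1 := (hH.2 1 1).1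
  have hdet := (hH.2 0 1).2
  have hexpand : quadForm u H =
      H 0 0 * u 0 ^ 2 + 2 * H 0 1 * (u 0 * u 1) + H 1 1 * u 1 ^ 2 := by
    simp only [quadForm_apply, dotProduct, mulVec, Fin.sum_univ_two, hH.1.apply 0 1]
    ring
  rw [hexpand]
  rcases h0.eq_or_lt with hzero | hpos
  · have hoff : H 0 1 = 0 := by
      rw [← hzero, zero_mul] at hdet
      exact pow_eq_zero_iff two_ne_zero |>.1 (hdet.antisymm (sq_nonneg _))
    rw [← hzero, hoff]
    linarith [mul_nonneg h1 (sq_nonneg (u 1))]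
  · refine nonneg_of_mul_nonneg_right (a := H 0 0) ?_ hpos
    calc 0 ≤ (H 0 0 * u 0 + H 0 1 * u 1) ^ 2 + (H 0 0 * H 1 1 - H 0 1 ^ 2) * u 1 ^ 2 :=
          add_nonneg (sq_nonneg _) (mul_nonneg (sub_nonneg.2 hdet) (sq_nonneg _))
      _ = H 0 0 * (H 0 0 * u 0 ^ 2 + 2 * H 0 1 * (u 0 * u 1) + H 1 1 * u 1 ^ 2) := by ring

end Cones

section Pairing

open scoped Matrix.Norms.L2Operator

variable {n : ℕ}

lemma trace_mul_vecMulVec_le (M : Matrix (Fin n) (Fin n) ℝ) (v w : Fin n → ℝ) :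
    (M * vecMulVec v w).trace ≤ ‖M‖ * (vecNorm v * vecNorm w) := by
  rw [mul_vecMulVec, trace_vecMulVec, dotProduct_comm, mul_comm (vecNorm v)]
  exact dotProduct_mulVec_le M w v

/-- `κ` bounds the nuclear norm on `C` by the trace: `tr (M H) ≤ κ ‖M‖ tr H` for `H ∈ C`, with the
spectral norm of `M`. It measures how much slack in the matrix inequality is lost by shrinking the
gap `X - xxᵀ`. -/
def PairingBound (C : Set (Matrix (Fin n) (Fin n) ℝ)) (κ : ℝ) : Prop :=
  ∀ M : Matrix (Fin n) (Fin n) ℝ, ∀ H ∈ C, (M * H).trace ≤ κ * (‖M‖ * H.trace)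

lemma pairingBound_coneC1 (n : ℕ) : PairingBound (coneC1 n) 1 := by
  intro M H hH
  obtain ⟨r, v, rfl⟩ := posSemidef_iff_eq_sum_vecMulVec.1 hH
  simp only [Finset.mul_sum, trace_sum, one_mul]
  refine Finset.sum_le_sum fun i _ => ?_
  rw [star_trivial, trace_vecMulVec, ← vecNorm_sq, sq]
  exact trace_mul_vecMulVec_le M (v i) (v i)

lemma pairingBound_coneC3 (n : ℕ) : PairingBound (coneC3 n) (√n) := by
  intro M H hH
  have hentry : ∀ i j, M i j * H j i ≤ |M i j| * H i i / 2 + |M i j| * H j j / 2 := fun i j =>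
    calc M i j * H j i ≤ |M i j| * |H j i| := by rw [← abs_mul]; exact le_abs_self _
      _ ≤ |M i j| * ((H i i + H j j) / 2) :=
          mul_le_mul_of_nonneg_left (by linarith [(hH.2 j i).2]) (abs_nonneg _)
      _ = |M i j| * H i i / 2 + |M i j| * H j j / 2 := by ring
  have hrows : ∀ A : Matrix (Fin n) (Fin n) ℝ,
      ∑ i, ∑ j, |A i j| * H i i / 2 ≤ √n * (‖A‖ * H.trace) / 2 := fun A =>
    calc ∑ i, ∑ j, |A i j| * H i i / 2 = ∑ i, (∑ j, |A i j|) * H i i / 2 := by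
          simp only [Finset.sum_mul, Finset.sum_div]
      _ ≤ ∑ i, √n * ‖A‖ * H i i / 2 := Finset.sum_le_sum fun i _ => by
          gcongr
          · exact (hH.2 i i).1
          · exact sum_abs_row_le A i
      _ = √n * (‖A‖ * H.trace) / 2 := by
          rw [← Finset.sum_div, ← Finset.mul_sum, mul_assoc]; rfl
  have htranspose := hrows Mᵀ
  rw [← conjTranspose_eq_transpose_of_trivial, l2_opNorm_conjTranspose,
    conjTranspose_eq_transpose_of_trivial, Finset.sum_comm] at htranspose
  calc (M * H).trace = ∑ i, ∑ j, M i j * H j i := rfl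
    _ ≤ ∑ i, ∑ j, |M i j| * H i i / 2 + ∑ i, ∑ j, |M i j| * H j j / 2 := by
        simp only [← Finset.sum_add_distrib]
        exact Finset.sum_le_sum fun i _ => Finset.sum_le_sum fun j _ => hentry i j
    _ ≤ √n * (‖M‖ * H.trace) / 2 + √n * (‖M‖ * H.trace) / 2 := add_le_add (hrows M) htranspose
    _ = √n * (‖M‖ * H.trace) := add_halves _

lemma pairingBound_coneC2 {n : ℕ} (hn : 2 ≤ n) : PairingBound (coneC2 n) (n - 1) := by
  intro M H hH
  rcases hn.eq_or_lt with rfl | h3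
  · have := pairingBound_coneC1 2 M H (coneC2_two_subset_coneC1 hH)
    norm_num at this ⊢
    exact this
  · have hn3 : (3 : ℝ) ≤ n := by exact_mod_cast h3
    have hsqrt : √n ≤ n - 1 := Real.sqrt_le_iff.2 ⟨by linarith, by nlinarith⟩
    refine (pairingBound_coneC3 n M H (coneC2_subset_coneC3 n hH)).trans ?_
    have htr := (isRelaxationCone_coneC2 n).trace_nonneg hH
    gcongr

end Pairing

section Relaxation

variable {n m : ℕ} {F0 : Matrix (Fin m) (Fin m) ℝ} {K : Fin n → Matrix (Fin m) (Fin m) ℝ}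
  {L : Fin n → Fin n → Matrix (Fin m) (Fin m) ℝ} {C : Set (Matrix (Fin n) (Fin n) ℝ)}
  {c xc a x y : Fin n → ℝ} {X : Matrix (Fin n) (Fin n) ℝ} {η r : ℝ}

lemma relObj_eq (c xc : Fin n → ℝ) (η : ℝ) (x : Fin n → ℝ) (X : Matrix (Fin n) (Fin n) ℝ) :
    relObj c xc η x X =
      c ⬝ᵥ x + η * (vecNorm (x - xc) ^ 2 + (X - vecMulVec x x).trace) := by
  rw [relObj, vecNorm_sq, trace_sub, trace_vecMulVec, sub_dotProduct, dotProduct_sub,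
    dotProduct_sub, dotProduct_comm x xc]
  ring

lemma relObj_vecMulVec_self (c xc : Fin n → ℝ) (η : ℝ) (x : Fin n → ℝ) :
    relObj c xc η x (vecMulVec x x) = c ⬝ᵥ x + η * vecNorm (x - xc) ^ 2 := by
  rw [relObj_eq, sub_self, trace_zero, add_zero]

lemma relObj_step (c xc b : Fin n → ℝ) (η τ : ℝ) (x : Fin n → ℝ)
    (X D : Matrix (Fin n) (Fin n) ℝ) :
    relObj c xc η (x + τ • b) (X + τ • (vecMulVec b xc + vecMulVec xc b) + D) =
      relObj c xc η x X + (τ * (c ⬝ᵥ b) + η * D.trace) := by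
  simp only [relObj, trace_add, trace_smul, trace_vecMulVec, dotProduct_add, dotProduct_smul,
    smul_eq_mul, dotProduct_comm b xc]
  ring

lemma relFeasible_vecMulVec_self (hC : IsRelaxationCone C) (ha : a ∈ feasSet F0 K L) :
    RelFeasible F0 K L C a (vecMulVec a a) :=
  ⟨isSymm_vecMulVec_self a, ha, by rw [sub_self]; exact hC.zero_mem⟩

lemma vecNorm_sub_le_and_trace_le_of_relObj_le (hη : 0 < η)
    (hc : vecNorm c ≤ η * (r - vecNorm (a - xc))) (hX : 0 ≤ (X - vecMulVec x x).trace)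
    (hle : relObj c xc η x X ≤ relObj c xc η a (vecMulVec a a)) :
    vecNorm (x - xc) ≤ r ∧ (X - vecMulVec x x).trace ≤ r ^ 2 := by
  rw [relObj_eq, relObj_vecMulVec_self] at hle
  have hlin : c ⬝ᵥ a - c ⬝ᵥ x ≤ vecNorm c * (vecNorm (a - xc) + vecNorm (x - xc)) :=
    calc c ⬝ᵥ a - c ⬝ᵥ x = c ⬝ᵥ ((a - xc) - (x - xc)) := by
          rw [sub_sub_sub_cancel_right, dotProduct_sub]
      _ ≤ vecNorm c * vecNorm ((a - xc) - (x - xc)) := dotProduct_le_vecNorm_mul_vecNorm _ _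
      _ ≤ vecNorm c * (vecNorm (a - xc) + vecNorm (x - xc)) :=
          mul_le_mul_of_nonneg_left (vecNorm_sub_le _ _) (vecNorm_nonneg c)
  have hwr : 0 ≤ r - vecNorm (a - xc) :=
    nonneg_of_mul_nonneg_right ((vecNorm_nonneg c).trans hc) hη
  have hv := vecNorm_nonneg (x - xc)
  have hw := vecNorm_nonneg (a - xc)
  generalize vecNorm (x - xc) = v at *
  generalize vecNorm (a - xc) = w at *
  generalize (X - vecMulVec x x).trace = t at *
  have hfactor : t ≤ (r - v) * (v + w) := by
    refine le_of_mul_le_mul_left ?_ hη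
    linarith [mul_le_mul_of_nonneg_right hc (add_nonneg hw hv)]
  have hvr : v ≤ r := by
    by_contra! h
    exact (hX.trans hfactor).not_gt (mul_neg_of_neg_of_pos (sub_neg.2 h) (by linarith))
  refine ⟨hvr, ?_⟩
  calc t ≤ (r - v) * (v + w) := hfactor
    _ ≤ (r - v) * (v + r) :=
        mul_le_mul_of_nonneg_left (add_le_add_right (sub_nonneg.1 hwr) v) (sub_nonneg.2 hvr)
    _ ≤ r ^ 2 := by linarith [sq_nonneg v]

section Compactness

lemma isClosed_setOf_relFeasible (hC : IsClosed C) :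
    IsClosed {p : (Fin n → ℝ) × Matrix (Fin n) (Fin n) ℝ | RelFeasible F0 K L C p.1 p.2} := by
  refine (isClosed_setOf_isSymm.preimage continuous_snd).inter (IsClosed.inter ?_ ?_)
  · refine isClosed_setOf_posSemidef.preimage (Continuous.neg ?_)
    unfold pencil
    fun_prop
  · exact hC.preimage (continuous_snd.sub (continuous_fst.matrix_vecMulVec continuous_fst))

lemma continuous_relObj (c xc : Fin n → ℝ) (η : ℝ) :
    Continuous fun p : (Fin n → ℝ) × Matrix (Fin n) (Fin n) ℝ => relObj c xc η p.1 p.2 := by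
  have htrace : Continuous fun p : (Fin n → ℝ) × Matrix (Fin n) (Fin n) ℝ => p.2.trace :=
    continuous_snd.matrix_trace
  have hdot : ∀ w : Fin n → ℝ,
      Continuous fun p : (Fin n → ℝ) × Matrix (Fin n) (Fin n) ℝ => w ⬝ᵥ p.1 :=
    fun w => continuous_const.dotProduct continuous_fst
  exact (hdot c).add (continuous_const.mul
    ((htrace.sub (continuous_const.mul (hdot xc))).add continuous_const))

lemma isCompact_setOf_relFeasible_and_relObj_le (hC : IsRelaxationCone C) (hη : 0 < η)
    (a : Fin n → ℝ) :
    IsCompact {p : (Fin n → ℝ) × Matrix (Fin n) (Fin n) ℝ | RelFeasible F0 K L C p.1 p.2 ∧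
      relObj c xc η p.1 p.2 ≤ relObj c xc η a (vecMulVec a a)} := by
  obtain ⟨r, hr⟩ : ∃ r, vecNorm c ≤ η * (r - vecNorm (a - xc)) :=
    ⟨vecNorm (a - xc) + vecNorm c / η, by rw [add_sub_cancel_left, mul_div_cancel₀ _ hη.ne']⟩
  have hclosed := (isClosed_setOf_relFeasible (F0 := F0) (K := K) (L := L) hC.isClosed).inter
    (isClosed_le (continuous_relObj c xc η)
      (continuous_const (y := relObj c xc η a (vecMulVec a a))))
  let lift (p : (Fin n → ℝ) × (Fin n → Fin n → ℝ)) : (Fin n → ℝ) × Matrix (Fin n) (Fin n) ℝ :=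
    (p.1, of p.2 + vecMulVec p.1 p.1)
  have hlift : Continuous lift := continuous_fst.prodMk
    (continuous_snd.add (continuous_fst.matrix_vecMulVec continuous_fst))
  refine ((isCompact_Icc (a := (xc - fun _ => r, fun _ _ => -r ^ 2))
    (b := (xc + fun _ => r, fun _ _ => r ^ 2))).image hlift).of_isClosed_subset hclosed ?_
  rintro ⟨x, X⟩ ⟨hfeas, hle⟩
  obtain ⟨hx, hX⟩ := vecNorm_sub_le_and_trace_le_of_relObj_le hη hr
    (hC.trace_nonneg hfeas.2.2) hle
  have hxi : ∀ i, |x i - xc i| ≤ r := fun i => (abs_apply_le_vecNorm (x - xc) i).trans hx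
  have hXij : ∀ i j, |(X - vecMulVec x x) i j| ≤ r ^ 2 := fun i j =>
    (hC.abs_apply_le_trace _ hfeas.2.2 i j).trans hX
  refine ⟨(x, X - vecMulVec x x), ⟨⟨fun i => ?_, fun i j => (abs_le.1 (hXij i j)).1⟩,
    fun i => ?_, fun i j => (abs_le.1 (hXij i j)).2⟩, Prod.ext rfl (sub_add_cancel _ _)⟩
  · exact sub_le_comm.1 (abs_sub_le_iff.1 (hxi i)).2
  · exact sub_le_iff_le_add'.1 (abs_sub_le_iff.1 (hxi i)).1

lemma exists_isOptRel (hC : IsRelaxationCone C) (hη : 0 < η) (hne : (feasSet F0 K L).Nonempty)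
    (c xc : Fin n → ℝ) : ∃ x X, IsOptRel F0 K L c xc η C x X := by
  obtain ⟨a, ha⟩ := hne
  obtain ⟨⟨x, X⟩, hmem, hmin⟩ :=
    (isCompact_setOf_relFeasible_and_relObj_le hC hη a).exists_isMinOn
      ⟨(a, vecMulVec a a), relFeasible_vecMulVec_self hC ha, le_refl (relObj c xc η _ _)⟩
      (continuous_relObj c xc η).continuousOn
  refine ⟨x, X, hmem.1, fun y Y hY => ?_⟩
  rcases le_total (relObj c xc η y Y) (relObj c xc η a (vecMulVec a a)) with h | h
  · exact isMinOn_iff.1 hmin (y, Y) ⟨hY, h⟩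
  · exact hmem.2.trans h

end Compactness

section Midpoint

lemma midpoint_sub_vecMulVec_midpoint (x y : Fin n → ℝ) :
    (1 / 2 : ℝ) • (vecMulVec x x + vecMulVec y y) -
        vecMulVec ((1 / 2 : ℝ) • (x + y)) ((1 / 2 : ℝ) • (x + y)) =
      (1 / 4 : ℝ) • vecMulVec (x - y) (x - y) := by
  ext i j
  simp only [Matrix.sub_apply, Matrix.smul_apply, Matrix.add_apply, vecMulVec_apply,
    Pi.smul_apply, Pi.add_apply, Pi.sub_apply, smul_eq_mul]
  ring

lemma RelFeasible.midpoint (hC : IsRelaxationCone C)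
    (hx : RelFeasible F0 K L C x (vecMulVec x x)) (hy : RelFeasible F0 K L C y (vecMulVec y y)) :
    RelFeasible F0 K L C ((1 / 2 : ℝ) • (x + y))
      ((1 / 2 : ℝ) • (vecMulVec x x + vecMulVec y y)) := by
  refine ⟨(hx.1.add hy.1).smul _, ?_, ?_⟩
  · have hF0 : F0 = (1 / 2 : ℝ) • (F0 + F0) := by rw [← two_smul ℝ F0, smul_smul]; norm_num
    rw [hF0, pencil_smul, pencil_add, NegSemidef', ← smul_neg, neg_add]
    exact (hx.2.1.add hy.2.1).smul (by norm_num)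
  · rw [midpoint_sub_vecMulVec_midpoint]
    exact hC.smul_mem _ (by norm_num) _ (hC.vecMulVec_self_mem _)

lemma IsOptRel.midpoint (hC : IsRelaxationCone C)
    (hx : IsOptRel F0 K L c xc η C x (vecMulVec x x))
    (hy : IsOptRel F0 K L c xc η C y (vecMulVec y y)) :
    IsOptRel F0 K L c xc η C ((1 / 2 : ℝ) • (x + y))
      ((1 / 2 : ℝ) • (vecMulVec x x + vecMulVec y y)) := by
  refine ⟨hx.1.midpoint hC hy.1, fun z Z hZ => ?_⟩
  have havg : relObj c xc η ((1 / 2 : ℝ) • (x + y))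
      ((1 / 2 : ℝ) • (vecMulVec x x + vecMulVec y y)) =
      (1 / 2) * (relObj c xc η x (vecMulVec x x) + relObj c xc η y (vecMulVec y y)) := by
    simp only [relObj, dotProduct_smul, dotProduct_add, trace_smul, trace_add, smul_eq_mul]
    ring
  linarith [hx.2 z Z hZ, hy.2 z Z hZ]

/-- The relaxation `(R_{η,C})` is exact: it has a unique optimal solution `(x*, X*)`, and
`X* = x* x*ᵀ`. -/
def IsExactRel (F0 : Matrix (Fin m) (Fin m) ℝ) (K : Fin n → Matrix (Fin m) (Fin m) ℝ)
    (L : Fin n → Fin n → Matrix (Fin m) (Fin m) ℝ) (c xc : Fin n → ℝ) (η : ℝ)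
    (C : Set (Matrix (Fin n) (Fin n) ℝ)) : Prop :=
  ∃ (xs : Fin n → ℝ) (Xs : Matrix (Fin n) (Fin n) ℝ),
    IsOptRel F0 K L c xc η C xs Xs ∧
    (∀ y Y, IsOptRel F0 K L c xc η C y Y → y = xs ∧ Y = Xs) ∧
    Xs = vecMulVec xs xs

lemma isExactRel_of_forall_eq_vecMulVec_self (hC : IsRelaxationCone C) (hη : 0 < η)
    (hne : (feasSet F0 K L).Nonempty)
    (hrank : ∀ x X, IsOptRel F0 K L c xc η C x X → X = vecMulVec x x) :
    IsExactRel F0 K L c xc η C := by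
  obtain ⟨x, X, hx⟩ := exists_isOptRel hC hη hne c xc
  refine ⟨x, X, hx, fun y Y hy => ?_, hrank x X hx⟩
  obtain rfl := hrank x X hx
  obtain rfl := hrank y Y hy
  -- Two rank-one optima have an optimal midpoint, whose gap is `(x - y)(x - y)ᵀ / 4`.
  have hgap := hrank _ _ (hx.midpoint hC hy)
  rw [← sub_eq_zero, midpoint_sub_vecMulVec_midpoint] at hgap
  have hxy : x - y = 0 := or_self_iff.1 (vecMulVec_eq_zero.1
    ((smul_eq_zero_iff_right (by norm_num)).1 hgap))
  obtain rfl := sub_eq_zero.1 hxy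
  exact ⟨rfl, rfl⟩

end Midpoint

lemma exists_mem_feasSet_vecNorm_sub_lt (hne : (feasSet F0 K L).Nonempty)
    (hr : distF F0 K L xc < r) : ∃ a ∈ feasSet F0 K L, vecNorm (a - xc) < r := by
  have hdist : {ρ | ∃ a ∈ feasSet F0 K L, ρ = vecNorm (xc - a)}.Nonempty :=
    ⟨_, hne.some, hne.some_mem, rfl⟩
  obtain ⟨_, ⟨a, ha, rfl⟩, har⟩ := exists_lt_of_csInf_lt hdist hr
  exact ⟨a, ha, by rwa [vecNorm_sub_comm]⟩

lemma eventually_isExactRel (hC : IsRelaxationCone C) (hne : (feasSet F0 K L).Nonempty)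
    (hr : distF F0 K L xc < r)
    (hrank : ∀ᶠ η in atTop, ∀ x X, IsOptRel F0 K L c xc η C x X →
      vecNorm (x - xc) ≤ r → X = vecMulVec x x) :
    ∀ᶠ η in atTop, IsExactRel F0 K L c xc η C := by
  obtain ⟨a, ha, har⟩ := exists_mem_feasSet_vecNorm_sub_lt hne hr
  have hlarge : ∀ᶠ η in atTop, vecNorm c ≤ η * (r - vecNorm (a - xc)) :=
    (tendsto_id.atTop_mul_const (sub_pos.2 har)).eventually_ge_atTop _
  filter_upwards [hrank, hlarge, eventually_gt_atTop 0] with η hrank hc hη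
  refine isExactRel_of_forall_eq_vecMulVec_self hC hη hne fun x X hx => hrank x X hx ?_
  exact (vecNorm_sub_le_and_trace_le_of_relObj_le hη hc (hC.trace_nonneg hx.1.2.2)
    (hx.2 _ _ (relFeasible_vecMulVec_self hC ha))).1

end Relaxation

section Descent

variable {n m : ℕ} {F0 : Matrix (Fin m) (Fin m) ℝ} {K : Fin n → Matrix (Fin m) (Fin m) ℝ}
  {L : Fin n → Fin n → Matrix (Fin m) (Fin m) ℝ} {C : Set (Matrix (Fin n) (Fin n) ℝ)}
  {c xc x z b : Fin n → ℝ} {X D : Matrix (Fin n) (Fin n) ℝ} {η κ r s τ θ : ℝ}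

lemma RelFeasible.step (hK : ∀ k, (K k).IsSymm) (hL : ∀ i j, (L i j).IsSymm)
    (hLsy : ∀ i j, L i j = L j i) (hx : RelFeasible F0 K L C x X)
    (hb : IsDescentDirection K L z s b) (hτ : 0 ≤ τ) (hD : D.IsSymm)
    (hslack : ∀ u, vecNorm u = 1 → (momMat L u * D).trace ≤ τ * s)
    (hgap : X + τ • (vecMulVec b z + vecMulVec z b) + D - vecMulVec (x + τ • b) (x + τ • b) ∈ C) :
    RelFeasible F0 K L C (x + τ • b) (X + τ • (vecMulVec b z + vecMulVec z b) + D) := by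
  have hpencil := pencil_step (F0 := F0) (K := K) hLsy x z b X D τ
  refine ⟨(hx.1.add ((isSymm_vecMulVec_add_vecMulVec b z).smul τ)).add hD, ?_, hgap⟩
  rw [hpencil]
  refine .of_unit ?_ fun u hu => ?_
  · rw [sum_smul_add_deltaMat hLsy]
    exact (hx.2.1.isSymm.add ((pencil_isSymm isSymm_zero hK hL _ _).smul τ)).add
      (pencil_isSymm isSymm_zero hK hL _ _)
  · rw [map_add, map_add, map_smul, smul_eq_mul, quadForm_pencil_zero_zero hLsy]
    linarith [hx.2.1.quadForm_nonpos u, hslack u hu,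
      mul_le_mul_of_nonneg_left (hb.quadForm_le u hu) hτ]

lemma IsOptRel.zero_le_of_step (hK : ∀ k, (K k).IsSymm) (hL : ∀ i j, (L i j).IsSymm)
    (hLsy : ∀ i j, L i j = L j i) (hx : IsOptRel F0 K L c xc η C x X)
    (hb : IsDescentDirection K L xc s b) (hτ : 0 ≤ τ) (hD : D.IsSymm)
    (hslack : ∀ u, vecNorm u = 1 → (momMat L u * D).trace ≤ τ * s)
    (hgap : X + τ • (vecMulVec b xc + vecMulVec xc b) + D -
      vecMulVec (x + τ • b) (x + τ • b) ∈ C) :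
    0 ≤ τ * (c ⬝ᵥ b) + η * D.trace := by
  have := hx.2 _ _ (hx.1.step hK hL hLsy hb hτ hD hslack hgap)
  rw [relObj_step] at this
  linarith

lemma IsDescentDirection.dotProduct_le (hb : IsDescentDirection K L z s b) (v : Fin n → ℝ) :
    v ⬝ᵥ b ≤ vecNorm v := by
  simpa [hb.vecNorm_eq_one] using dotProduct_le_vecNorm_mul_vecNorm v b

lemma IsDescentDirection.dotProduct_self (hb : IsDescentDirection K L z s b) : b ⬝ᵥ b = 1 := by
  rw [← vecNorm_sq, hb.vecNorm_eq_one, one_pow]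

lemma trace_momMat_mul_vecMulVec_le {u : Fin m → ℝ} (hu : vecNorm u = 1) (v w : Fin n → ℝ) :
    (momMat L u * vecMulVec v w).trace ≤ pencilNorm L * (vecNorm v * vecNorm w) :=
  (trace_mul_vecMulVec_le _ v w).trans (mul_le_mul_of_nonneg_right (l2_opNorm_momMat_le L hu)
    (mul_nonneg (vecNorm_nonneg v) (vecNorm_nonneg w)))

lemma neg_trace_momMat_mul_vecMulVec_le {u : Fin m → ℝ} (hu : vecNorm u = 1)
    (v w : Fin n → ℝ) :
    -(momMat L u * vecMulVec v w).trace ≤ pencilNorm L * (vecNorm v * vecNorm w) := by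
  simpa [neg_vecMulVec, vecNorm_eq_norm] using trace_momMat_mul_vecMulVec_le (L := L) hu (-v) w

open scoped Matrix.Norms.L2Operator in
lemma neg_trace_momMat_mul_le_of_pairingBound (hC : IsRelaxationCone C) (hκ : 0 ≤ κ)
    (hpair : PairingBound C κ) {u : Fin m → ℝ} (hu : vecNorm u = 1)
    {H : Matrix (Fin n) (Fin n) ℝ} (hH : H ∈ C) :
    -(momMat L u * H).trace ≤ κ * (pencilNorm L * H.trace) := by
  rw [← trace_neg, ← neg_mul]
  refine (hpair _ H hH).trans ?_
  rw [norm_neg]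
  have htr := hC.trace_nonneg hH
  have hM := l2_opNorm_momMat_le L hu
  gcongr

/-- The slack `τ s` created by a step of length `τ` along `b` is spent on decreasing `X` by
`τ (s / ‖p‖₂) bbᵀ`, which the room around the gap allows. -/
lemma IsOptRel.notMem_nhdsWithin_isSymm (hK : ∀ k, (K k).IsSymm) (hL : ∀ i j, (L i j).IsSymm)
    (hLsy : ∀ i j, L i j = L j i) (hp : 0 < pencilNorm L) (hs : 0 ≤ s)
    (hb : IsDescentDirection K L xc s b) (hlarge : pencilNorm L * vecNorm c < η * s)
    (hx : IsOptRel F0 K L c xc η C x X) : C ∉ 𝓝[{G | G.IsSymm}] (X - vecMulVec x x) := by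
  intro hnhds
  set σ := s / pencilNorm L with hσ
  have hσs : σ * pencilNorm L = s := div_mul_cancel₀ s hp.ne'
  set D : ℝ → Matrix (Fin n) (Fin n) ℝ := fun τ => -((τ * σ) • vecMulVec b b) with hD
  set gap : ℝ → Matrix (Fin n) (Fin n) ℝ := fun τ =>
    X + τ • (vecMulVec b xc + vecMulVec xc b) + D τ - vecMulVec (x + τ • b) (x + τ • b) with hgap
  have hDsymm : ∀ τ, (D τ).IsSymm := fun τ => ((isSymm_vecMulVec_self b).smul _).neg
  have htendsto : Tendsto gap (𝓝[>] 0) (𝓝[{G | G.IsSymm}] (X - vecMulVec x x)) := by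
    refine tendsto_nhdsWithin_iff.2 ⟨?_, .of_forall fun τ => ?_⟩
    · have hcont : Continuous gap := by fun_prop
      exact tendsto_nhdsWithin_of_tendsto_nhds (hcont.tendsto' 0 _ (by simp [hgap, hD]))
    · exact ((hx.1.1.add ((isSymm_vecMulVec_add_vecMulVec b xc).smul τ)).add (hDsymm τ)).sub
        (isSymm_vecMulVec_self _)
  obtain ⟨τ, hmem, hτ : 0 < τ⟩ := ((htendsto.eventually hnhds).and self_mem_nhdsWithin).exists
  have hobj := hx.zero_le_of_step hK hL hLsy hb hτ.le (hDsymm τ) (fun u hu => ?_) hmem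
  · have hcσ : vecNorm c < η * σ := by rwa [hσ, ← mul_div_assoc, lt_div_iff₀' hp]
    rw [hD, trace_neg, trace_smul, trace_vecMulVec, hb.dotProduct_self, smul_eq_mul] at hobj
    linarith [mul_lt_mul_of_pos_left ((hb.dotProduct_le c).trans_lt hcσ) hτ]
  · have hM := neg_trace_momMat_mul_vecMulVec_le (L := L) hu b b
    rw [hb.vecNorm_eq_one, mul_one, mul_one] at hM
    rw [hD, mul_neg, trace_neg, Matrix.mul_smul, trace_smul, smul_eq_mul, ← mul_neg, ← hσs,
      ← mul_assoc]
    exact mul_le_mul_of_nonneg_left hM (by positivity)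

lemma IsOptRel.zero_le_of_shrink (hK : ∀ k, (K k).IsSymm) (hL : ∀ i j, (L i j).IsSymm)
    (hLsy : ∀ i j, L i j = L j i) (hC : IsRelaxationCone C) (hκ : 0 ≤ κ)
    (hpair : PairingBound C κ) (hp : 0 ≤ pencilNorm L) (hη : 0 ≤ η)
    (hb : IsDescentDirection K L xc s b) (hx : IsOptRel F0 K L c xc η C x X)
    (hr : vecNorm (x - xc) ≤ r) (hτ : 0 ≤ τ) (hθ0 : 0 ≤ θ) (hθ1 : θ ≤ 1)
    (hslack : θ * (κ * (pencilNorm L * (X - vecMulVec x x).trace)) +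
      τ * (2 * (pencilNorm L * r)) + τ ^ 2 * pencilNorm L ≤ τ * s) :
    0 ≤ τ * vecNorm c + η * (2 * τ * r + τ ^ 2 - θ * (X - vecMulVec x x).trace) := by
  set P := pencilNorm L
  set H := X - vecMulVec x x with hH
  set w := x - xc with hw
  -- `D` absorbs the error of linearizing `xxᵀ` at `xc` instead of `x`, so that only the shrinking
  -- of the gap to `(1 - θ) H` remains.
  set D := -(θ • H) + τ • (vecMulVec b w + vecMulVec w b) + τ ^ 2 • vecMulVec b b with hD
  have hgap : X + τ • (vecMulVec b xc + vecMulVec xc b) + D -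
      vecMulVec (x + τ • b) (x + τ • b) = (1 - θ) • H := by
    simp only [hD, hH, hw, vecMulVec_sub, sub_vecMulVec, vecMulVec_add, add_vecMulVec,
      vecMulVec_smul, smul_vecMulVec]
    module
  have hDsymm : D.IsSymm := (((hC.isSymm H hx.1.2.2).smul θ).neg.add
    ((isSymm_vecMulVec_add_vecMulVec b w).smul τ)).add ((isSymm_vecMulVec_self b).smul _)
  have hobj := hx.zero_le_of_step hK hL hLsy hb hτ hDsymm (fun u hu => ?_)
    (hgap ▸ hC.smul_mem _ (sub_nonneg.2 hθ1) H hx.1.2.2)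
  · have htrace : D.trace ≤ 2 * τ * r + τ ^ 2 - θ * H.trace := by
      simp only [hD, trace_add, trace_neg, trace_smul, trace_vecMulVec, smul_eq_mul,
        hb.dotProduct_self, dotProduct_comm b w]
      linarith [mul_le_mul_of_nonneg_left ((hb.dotProduct_le w).trans hr) hτ]
    linarith [mul_le_mul_of_nonneg_left htrace hη,
      mul_le_mul_of_nonneg_left (hb.dotProduct_le c) hτ]
  · have hMH := neg_trace_momMat_mul_le_of_pairingBound (L := L) hC hκ hpair hu hx.1.2.2
    have hMbw := trace_momMat_mul_vecMulVec_le (L := L) hu b w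
    have hMwb := trace_momMat_mul_vecMulVec_le (L := L) hu w b
    have hMbb := trace_momMat_mul_vecMulVec_le (L := L) hu b b
    rw [hb.vecNorm_eq_one] at hMbw hMwb hMbb
    simp only [hD, mul_add, mul_neg, Matrix.mul_smul, trace_add, trace_neg, trace_smul, smul_eq_mul]
    linarith [mul_le_mul_of_nonneg_left hMH hθ0, mul_le_mul_of_nonneg_left hMbw hτ,
      mul_le_mul_of_nonneg_left hMwb hτ, mul_le_mul_of_nonneg_left hMbb (sq_nonneg τ),
      mul_le_mul_of_nonneg_left hr (mul_nonneg hτ hp)]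

lemma IsOptRel.eq_vecMulVec_self_of_pairingBound (hK : ∀ k, (K k).IsSymm)
    (hL : ∀ i j, (L i j).IsSymm) (hLsy : ∀ i j, L i j = L j i) (hC : IsRelaxationCone C)
    (hκ : 0 < κ) (hpair : PairingBound C κ) (hp : 0 < pencilNorm L) (hη : 0 < η)
    (hb : IsDescentDirection K L xc s b) (hx : IsOptRel F0 K L c xc η C x X)
    (hr : vecNorm (x - xc) ≤ r)
    (hlarge : κ * (pencilNorm L * vecNorm c) < η * (s - 2 * (1 + κ) * pencilNorm L * r)) :
    X = vecMulVec x x := by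
  by_contra! hne
  set P := pencilNorm L
  set h := (X - vecMulVec x x).trace
  have hh : 0 < h := hC.trace_pos hx.1.2.2 (sub_ne_zero.2 hne)
  have hr0 : 0 ≤ r := (vecNorm_nonneg _).trans hr
  have hβ : 0 < s - 2 * P * r := by
    have hgap := pos_of_mul_pos_right
      ((mul_nonneg hκ.le (mul_nonneg hp.le (vecNorm_nonneg c))).trans_lt hlarge) hη.le
    linarith [mul_nonneg hκ.le (mul_nonneg hp.le hr0)]
  set β := s - 2 * P * r with hβ_def
  have hsmall : ∀ {f : ℝ → ℝ} {y : ℝ}, Continuous f → f 0 < y → ∀ᶠ τ in 𝓝[>] 0, f τ < y :=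
    fun hf h0 => ((hf.tendsto 0).mono_left nhdsWithin_le_nhds).eventually_lt_const h0
  obtain ⟨τ, hτβ, hτh, hτη, hτ : 0 < τ⟩ := ((hsmall (f := fun τ => τ * P) (y := β)
      (by fun_prop) (by simpa using hβ)).and <|
    (hsmall (f := fun τ => τ * (β - τ * P)) (y := κ * (P * h))
      (by fun_prop) (by rw [zero_mul]; positivity)).and <|
    (hsmall (f := fun τ => τ * (η * P * (1 + κ)))
      (y := η * (s - 2 * (1 + κ) * P * r) - κ * (P * vecNorm c))
      (by fun_prop) (by rw [zero_mul]; exact sub_pos.2 hlarge)).and self_mem_nhdsWithin).exists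
  -- `θ` is chosen so that shrinking the gap uses up the slack exactly.
  set θ := τ * (β - τ * P) / (κ * (P * h))
  have hθ : θ * (κ * (P * h)) = τ * (β - τ * P) := div_mul_cancel₀ _ (by positivity)
  have hobj := hx.zero_le_of_shrink hK hL hLsy hC hκ.le hpair hp.le hη.le hb hr hτ.le
    (div_nonneg (mul_nonneg hτ.le (sub_nonneg.2 hτβ.le)) (by positivity) : 0 ≤ θ)
    ((div_le_one (by positivity)).2 hτh.le) (by rw [hθ, hβ_def]; exact le_of_eq (by ring))
  have hfactor : κ * P * (τ * vecNorm c + η * (2 * τ * r + τ ^ 2 - θ * h)) =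
      τ * (τ * (η * P * (1 + κ)) -
        (η * (s - 2 * (1 + κ) * P * r) - κ * (P * vecNorm c))) := by
    rw [hβ_def] at hθ
    linear_combination -η * hθ
  have hneg := mul_neg_of_pos_of_neg hτ (sub_neg.2 hτη)
  rw [← hfactor] at hneg
  exact hneg.not_ge (mul_nonneg (by positivity) hobj)

end Descent

section Exactness

variable {n m : ℕ} {F0 : Matrix (Fin m) (Fin m) ℝ} {K : Fin n → Matrix (Fin m) (Fin m) ℝ}
  {L : Fin n → Fin n → Matrix (Fin m) (Fin m) ℝ} {C : Set (Matrix (Fin n) (Fin n) ℝ)}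
  {xc : Fin n → ℝ} {κ : ℝ}

lemma eventually_isExactRel_of_pairingBound (hK : ∀ k, (K k).IsSymm)
    (hL : ∀ i j, (L i j).IsSymm) (hLsy : ∀ i j, L i j = L j i) (hC : IsRelaxationCone C)
    (hκ : 0 < κ) (hpair : PairingBound C κ) (hne : (feasSet F0 K L).Nonempty)
    (hp : 0 < pencilNorm L) (hs : 0 < sFun K L xc)
    (hd : distF F0 K L xc / sFun K L xc < 1 / (2 * (1 + κ)) / pencilNorm L) (c : Fin n → ℝ) :
    ∀ᶠ η in atTop, IsExactRel F0 K L c xc η C := by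
  have hPκ : 0 < 2 * (1 + κ) * pencilNorm L := by positivity
  have hdist : 2 * (1 + κ) * pencilNorm L * distF F0 K L xc < sFun K L xc := by
    rwa [div_div, div_lt_div_iff₀ hs hPκ, one_mul, mul_comm] at hd
  obtain ⟨r, hdr, hrs⟩ := exists_between ((lt_div_iff₀' hPκ).2 hdist)
  rw [lt_div_iff₀' hPκ] at hrs
  obtain ⟨s, hrs, hs'⟩ := exists_between (max_lt hrs hs)
  obtain ⟨hrs, hs0⟩ := max_lt_iff.1 hrs
  obtain ⟨b, hb⟩ := exists_isDescentDirection hs0.le hs'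
  refine eventually_isExactRel hC hne hdr ?_
  filter_upwards [eventually_gt_atTop 0,
    (tendsto_id.atTop_mul_const (sub_pos.2 hrs)).eventually_gt_atTop
      (κ * (pencilNorm L * vecNorm c))] with η hη hlarge x X hx hxr
  exact hx.eq_vecMulVec_self_of_pairingBound hK hL hLsy hC hκ hpair hp hη hb hxr hlarge

lemma coneC2_one_mem_nhdsWithin {H : Matrix (Fin 1) (Fin 1) ℝ} (hH : 0 < H.trace) :
    coneC2 1 ∈ 𝓝[{G | G.IsSymm}] H := by
  have hnhds : {G : Matrix (Fin 1) (Fin 1) ℝ | 0 < G.trace} ∈ 𝓝 H :=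
    (isOpen_lt continuous_const continuous_id.matrix_trace).mem_nhds hH
  filter_upwards [self_mem_nhdsWithin, mem_nhdsWithin_of_mem_nhds hnhds] with G hsymm htrace
  refine ⟨hsymm, fun i j => ?_⟩
  rw [Subsingleton.elim i 0, Subsingleton.elim j 0]
  rw [trace_fin_one] at htrace
  exact ⟨htrace.le, (sq _).le⟩

lemma eventually_isExactRel_coneC2_one {F0 : Matrix (Fin m) (Fin m) ℝ}
    {K : Fin 1 → Matrix (Fin m) (Fin m) ℝ} {L : Fin 1 → Fin 1 → Matrix (Fin m) (Fin m) ℝ}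
    {xc : Fin 1 → ℝ} (hK : ∀ k, (K k).IsSymm) (hL : ∀ i j, (L i j).IsSymm)
    (hne : (feasSet F0 K L).Nonempty) (hp : 0 < pencilNorm L) (hs : 0 < sFun K L xc)
    (c : Fin 1 → ℝ) : ∀ᶠ η in atTop, IsExactRel F0 K L c xc η (coneC2 1) := by
  obtain ⟨s, hs0, hs'⟩ := exists_between hs
  obtain ⟨b, hb⟩ := exists_isDescentDirection hs0.le hs'
  have hLsy : ∀ i j, L i j = L j i := fun i j => by rw [Subsingleton.elim i j]
  refine eventually_isExactRel (isRelaxationCone_coneC2 1) hne (lt_add_one _) ?_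
  filter_upwards [(tendsto_id.atTop_mul_const hs0).eventually_gt_atTop
    (pencilNorm L * vecNorm c)] with η hlarge x X hx _
  by_contra! hX
  exact hx.notMem_nhdsWithin_isSymm hK hL hLsy hp hs0.le hb hlarge (coneC2_one_mem_nhdsWithin
    ((isRelaxationCone_coneC2 1).trace_pos hx.1.2.2 (sub_ne_zero.2 hX)))

end Exactness

theorem bmi_theorem_two {n m : ℕ} (hn : 0 < n) (hm : 0 < m)
    (F0 : Matrix (Fin m) (Fin m) ℝ)
    (K : Fin n → Matrix (Fin m) (Fin m) ℝ)
    (L : Fin n → Fin n → Matrix (Fin m) (Fin m) ℝ)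
    (hF0 : F0.IsSymm) (hK : ∀ k, (K k).IsSymm)
    (hL : ∀ i j, (L i j).IsSymm) (hLsy : ∀ i j, L i j = L j i)
    (c xc : Fin n → ℝ) (k : Fin 3)
    (ω : ℝ)
    (hω : ω = if k = 0 then 1/4 else if k = 1 then 1/(2*(n : ℝ))
          else 1/(2 + 2*Real.sqrt (n : ℝ)))
    (C : Set (Matrix (Fin n) (Fin n) ℝ))
    (hC : C = if k = 0 then coneC1 n else if k = 1 then coneC2 n else coneC3 n)
    (hne : (feasSet F0 K L).Nonempty)
    (hp : 0 < pencilNorm L)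
    (hs : 0 < sFun K L xc)
    (hd : distF F0 K L xc / sFun K L xc < ω / pencilNorm L) :
    ∃ η₀ > (0 : ℝ), ∀ η ≥ η₀,
      ∃ (xs : Fin n → ℝ) (Xs : Matrix (Fin n) (Fin n) ℝ),
        IsOptRel F0 K L c xc η C xs Xs ∧
        (∀ y Y, IsOptRel F0 K L c xc η C y Y → y = xs ∧ Y = Xs) ∧
        Xs = vecMulVec xs xs := by
  suffices h : ∀ᶠ η in atTop, IsExactRel F0 K L c xc η C by
    obtain ⟨N, hN⟩ := eventually_atTop.1 h
    exact ⟨max N 1, lt_max_of_lt_right one_pos, fun η hη => hN η (le_of_max_le_left hη)⟩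
  subst hω hC
  fin_cases k
  · refine eventually_isExactRel_of_pairingBound hK hL hLsy (isRelaxationCone_coneC1 n) one_pos
      (pairingBound_coneC1 n) hne hp hs (hd.trans_eq ?_) c
    norm_num
  · rcases (Nat.one_le_iff_ne_zero.2 hn.ne').eq_or_lt with rfl | hn2
    · exact eventually_isExactRel_coneC2_one hK hL hne hp hs c
    · have hκ : (0 : ℝ) < n - 1 := sub_pos.2 (Nat.one_lt_cast.2 hn2)
      refine eventually_isExactRel_of_pairingBound hK hL hLsy (isRelaxationCone_coneC2 n) hκ
        (pairingBound_coneC2 hn2) hne hp hs (hd.trans_eq ?_) c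
      simp
  · refine eventually_isExactRel_of_pairingBound hK hL hLsy (isRelaxationCone_coneC3 n)
      (Real.sqrt_pos.2 (Nat.cast_pos.2 hn)) (pairingBound_coneC3 n) hne hp hs (hd.trans_eq ?_) c
    simp [mul_add]
end
end

section
/- Lemma 2: Suppose x̌ ∈ F is a feasible point of the BMI problem that satisfies the MFCQ condition. Then there exists η₀ > 0 such that for all η ≥ η₀, every optimal solution x* of the penalized problem (P_η) also satisfies the MFCQ condition. -/
/-!
MFCQ is an open condition: with the direction `b` fixed, the matrix in its definition is symmetric
and continuous in `x`, and positive definiteness is an open condition among Hermitian matrices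
because the unit sphere is compact. On the other hand `x ↦ cᵀx` is `C`-Lipschitz for some `C`, so
`cᵀx + η‖x - xc‖² ≤ cᵀxc` forces `η‖x - xc‖ ≤ C`. Hence, for large `η`, every point at least as good
as `xc` for `(P_η)` lies in the neighbourhood of `xc` on which MFCQ holds.
-/

open Matrix

noncomputable section

open Filter
open scoped Topology

section PosDef

open scoped ComplexOrder

variable {ι 𝕜 : Type*} [Fintype ι] [RCLike 𝕜] {A : Matrix ι ι 𝕜}

lemma posDef_of_re_dotProduct_mulVec_pos (hA : A.IsHermitian)
    (h : ∀ u : ι → 𝕜, u ≠ 0 → 0 < RCLike.re (star u ⬝ᵥ A *ᵥ u)) : A.PosDef :=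
  .of_dotProduct_mulVec_pos hA fun u hu =>
    RCLike.pos_iff.mpr ⟨h u hu, hA.im_star_dotProduct_mulVec_self u⟩

lemma re_dotProduct_mulVec_smul (A : Matrix ι ι 𝕜) (r : ℝ) (u : ι → 𝕜) :
    RCLike.re (star (r • u) ⬝ᵥ A *ᵥ (r • u)) = r ^ 2 * RCLike.re (star u ⬝ᵥ A *ᵥ u) := by
  simp only [star_smul, star_trivial, mulVec_smul, smul_dotProduct, dotProduct_smul,
    RCLike.smul_re, sq, mul_assoc]

lemma posDef_of_forall_mem_sphere (hA : A.IsHermitian)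
    (h : ∀ u ∈ Metric.sphere (0 : ι → 𝕜) 1, 0 < RCLike.re (star u ⬝ᵥ A *ᵥ u)) : A.PosDef := by
  refine posDef_of_re_dotProduct_mulVec_pos hA fun u hu => ?_
  have hnorm : 0 < ‖u‖ := norm_pos_iff.mpr hu
  have hunit : ‖u‖⁻¹ • u ∈ Metric.sphere (0 : ι → 𝕜) 1 := by
    simp [norm_smul, hnorm.ne']
  have hpos := h _ hunit
  rw [re_dotProduct_mulVec_smul] at hpos
  exact pos_of_mul_pos_right hpos (sq_nonneg _)

lemma eventually_posDef_nhdsWithin_isHermitian {ι : Type*} [Finite ι] {A₀ : Matrix ι ι 𝕜}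
    (h₀ : A₀.PosDef) : ∀ᶠ A in 𝓝[{A | A.IsHermitian}] A₀, A.PosDef := by
  cases nonempty_fintype ι
  have hsphere : ∀ᶠ A in 𝓝 A₀, ∀ u ∈ Metric.sphere (0 : ι → 𝕜) 1,
      0 < RCLike.re (star u ⬝ᵥ A *ᵥ u) := by
    refine (isCompact_sphere _ _).eventually_forall_of_forall_eventually fun u hu => ?_
    have hcont : Continuous fun z : Matrix ι ι 𝕜 × (ι → 𝕜) =>
        RCLike.re (star z.2 ⬝ᵥ z.1 *ᵥ z.2) := by
      fun_prop
    have hu0 : u ≠ 0 := ne_zero_of_mem_unit_sphere ⟨u, hu⟩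
    exact hcont.continuousAt.eventually_const_lt (h₀.re_dotProduct_pos hu0)
  filter_upwards [hsphere.filter_mono nhdsWithin_le_nhds, self_mem_nhdsWithin] with A hpos hA
  exact posDef_of_forall_mem_sphere hA hpos

end PosDef

section Penalization

variable {X : Type*} [PseudoMetricSpace X] {f : X → ℝ} {C : NNReal} {a x : X} {η : ℝ}

lemma mul_dist_le_of_add_mul_sq_dist_le (hf : LipschitzWith C f)
    (h : f x + η * dist x a ^ 2 ≤ f a) : η * dist x a ≤ C := by
  rcases (dist_nonneg (x := x) (y := a)).eq_or_lt with h0 | hpos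
  · simp [← h0]
  · have hmul : η * dist x a * dist x a ≤ C * dist x a :=
      calc η * dist x a * dist x a = η * dist x a ^ 2 := by ring
        _ ≤ f a - f x := by linarith
        _ ≤ C * dist x a := by
          rw [dist_comm]
          exact (le_abs_self _).trans (hf.dist_le_mul a x)
    exact le_of_mul_le_mul_right hmul hpos

lemma eventually_atTop_forall_of_add_mul_sq_dist_le {P : X → Prop} (hf : LipschitzWith C f)
    (hP : ∀ᶠ x in 𝓝 a, P x) :
    ∀ᶠ η : ℝ in atTop, ∀ x, f x + η * dist x a ^ 2 ≤ f a → P x := by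
  obtain ⟨ε, hε, hball⟩ := Metric.eventually_nhds_iff.mp hP
  filter_upwards [eventually_gt_atTop (C / ε : ℝ)] with η hη x hx
  have hη0 : 0 < η := lt_of_le_of_lt (by positivity) hη
  have hlt : η * dist x a < η * ε :=
    (mul_dist_le_of_add_mul_sq_dist_le hf hx).trans_lt ((div_lt_iff₀ hε).mp hη)
  exact hball (lt_of_mul_lt_mul_left hlt hη0.le)

end Penalization

lemma norm_le_vecNorm {k : ℕ} (u : Fin k → ℝ) : ‖u‖ ≤ vecNorm u :=
  (pi_norm_le_iff_of_nonneg (Real.sqrt_nonneg _)).mpr fun i =>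
    Real.abs_le_sqrt (Finset.single_le_sum (f := fun j => u j ^ 2)
      (fun _ _ => sq_nonneg _) (Finset.mem_univ i))

lemma penObj_self {n : ℕ} (c a : Fin n → ℝ) (η : ℝ) : penObj c a η a = c ⬝ᵥ a := by
  simp [penObj, vecNorm]

lemma dotProduct_add_mul_sq_dist_le_penObj {n : ℕ} (c a x : Fin n → ℝ) {η : ℝ} (hη : 0 ≤ η) :
    c ⬝ᵥ x + η * dist x a ^ 2 ≤ penObj c a η x := by
  rw [penObj, dist_eq_norm]
  gcongr
  exact norm_le_vecNorm _

lemma exists_lipschitzWith_dotProduct {ι : Type*} [Fintype ι] (c : ι → ℝ) :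
    ∃ C, LipschitzWith C (c ⬝ᵥ · : (ι → ℝ) → ℝ) :=
  ⟨_, (dotProductBilin ℝ ℝ c).toContinuousLinearMap.lipschitz⟩

section MFCQ

variable {n m : ℕ} {F0 : Matrix (Fin m) (Fin m) ℝ} {K : Fin n → Matrix (Fin m) (Fin m) ℝ}
  {L : Fin n → Fin n → Matrix (Fin m) (Fin m) ℝ}

variable (F0 K L) in
/-- The matrix `p(x, xxᵀ) + ∑ₖ bₖ (Kₖ + δₖ(x))` of the MFCQ condition; if `Lᵢⱼ = Lⱼᵢ`, it is the
first-order Taylor expansion at `x` of `y ↦ p(y, yyᵀ)`, evaluated at `y = x + b`. -/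
def linearizedPencil (b x : Fin n → ℝ) : Matrix (Fin m) (Fin m) ℝ :=
  pencil F0 K L x (vecMulVec x x) + ∑ k, b k • (K k + deltaMat L k x)

variable (F0 K L) in
lemma continuous_linearizedPencil (b : Fin n → ℝ) : Continuous (linearizedPencil F0 K L b) := by
  unfold linearizedPencil
  simp only [pencil, deltaMat, vecMulVec_apply]
  fun_prop

lemma isSymm_linearizedPencil (hF0 : F0.IsSymm) (hK : ∀ k, (K k).IsSymm)
    (hL : ∀ i j, (L i j).IsSymm) (b x : Fin n → ℝ) : (linearizedPencil F0 K L b x).IsSymm := by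
  simp only [linearizedPencil, pencil, deltaMat, IsSymm, transpose_add, transpose_sum,
    transpose_smul, hF0.eq, (hK _).eq, (hL _ _).eq]

lemma MFCQ.eventually_nhds (hF0 : F0.IsSymm) (hK : ∀ k, (K k).IsSymm)
    (hL : ∀ i j, (L i j).IsSymm) {a : Fin n → ℝ} (h : MFCQ F0 K L a) :
    ∀ᶠ x in 𝓝 a, MFCQ F0 K L x := by
  obtain ⟨b, hb⟩ := h
  have htendsto : Tendsto (fun x => -linearizedPencil F0 K L b x) (𝓝 a)
      (𝓝[{A | A.IsHermitian}] (-linearizedPencil F0 K L b a)) :=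
    tendsto_nhdsWithin_iff.mpr ⟨(continuous_linearizedPencil F0 K L b).neg.tendsto a,
      .of_forall fun x => (isSymm_linearizedPencil hF0 hK hL b x).neg⟩
  exact (htendsto.eventually (eventually_posDef_nhdsWithin_isHermitian hb)).mono
    fun _ hx => ⟨b, hx⟩

theorem bmi_lemma_two_general (hF0 : F0.IsSymm) (hK : ∀ k, (K k).IsSymm)
    (hL : ∀ i j, (L i j).IsSymm) (c : Fin n → ℝ) {xc : Fin n → ℝ} (hmfcq : MFCQ F0 K L xc) :
    ∃ η₀ > (0 : ℝ), ∀ η ≥ η₀, ∀ x : Fin n → ℝ,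
      penObj c xc η x ≤ penObj c xc η xc → MFCQ F0 K L x := by
  obtain ⟨C, hC⟩ := exists_lipschitzWith_dotProduct c
  have hlarge := eventually_atTop_forall_of_add_mul_sq_dist_le hC
    (hmfcq.eventually_nhds hF0 hK hL)
  obtain ⟨η₀, h⟩ := ((eventually_gt_atTop 0).and hlarge).exists_forall_of_atTop
  refine ⟨η₀, (h η₀ le_rfl).1, fun η hη x hx => ?_⟩
  obtain ⟨hη0, hmem⟩ := h η hη
  refine hmem x ?_
  calc c ⬝ᵥ x + η * dist x xc ^ 2 ≤ penObj c xc η x :=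
        dotProduct_add_mul_sq_dist_le_penObj c xc x hη0.le
    _ ≤ penObj c xc η xc := hx
    _ = c ⬝ᵥ xc := penObj_self c xc η

end MFCQ

theorem bmi_lemma_two {n m : ℕ} (hn : 0 < n) (hm : 0 < m)
    (F0 : Matrix (Fin m) (Fin m) ℝ)
    (K : Fin n → Matrix (Fin m) (Fin m) ℝ)
    (L : Fin n → Fin n → Matrix (Fin m) (Fin m) ℝ)
    (hF0 : F0.IsSymm) (hK : ∀ k, (K k).IsSymm)
    (hL : ∀ i j, (L i j).IsSymm) (hLsy : ∀ i j, L i j = L j i)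
    (c xc : Fin n → ℝ)
    (hfeas : xc ∈ feasSet F0 K L)
    (hmfcq : MFCQ F0 K L xc) :
    ∃ η₀ > (0 : ℝ), ∀ η ≥ η₀,
      ∀ xs : Fin n → ℝ, IsOptPen F0 K L c xc η xs → MFCQ F0 K L xs := by
  obtain ⟨η₀, hη₀, h⟩ := bmi_lemma_two_general hF0 hK hL c hmfcq
  exact ⟨η₀, hη₀, fun η hη xs hxs => h η hη xs (hxs.2 xc hfeas)⟩
end
end
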